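/- arXiv:2602.16046 — 2 statements merged into one kernel-verified Lean document; each statement's English description precedes it below -/
import Mathlib

section
/- Let X be an infinite Tychonoff space such that X × Y is Menger for every hereditarily Lindelöf Menger infinite Tychonoff space Y. Then for every free ultrafilter U on ℕ with 𝔟(U) = 𝔡 and every hereditarily Lindelöf U-Menger infinite Tychonoff space T, the product X × T is U-Menger (i.e., in the class of hereditarily Lindelöf spaces, each productively Menger space is productively U-Menger for all ultrafilters U with 𝔟(U) = 𝔡). -/
open Cardinal

/-- `a ≤* b`: the set `[a ≤ b]` is cofinite. -/
def LeStar (a b : ℕ → ℕ) : Prop := {n | ¬ a n ≤ b n}.Finite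

/-- `a ≤^∞ b`: the set `[a ≤ b]` is infinite. -/
def LeInf (a b : ℕ → ℕ) : Prop := {n | a n ≤ b n}.Infinite

/-- `a ≤_U b`: the set `[a ≤ b]` belongs to the ultrafilter `U`. -/
def LeU (U : Ultrafilter ℕ) (a b : ℕ → ℕ) : Prop := {n | a n ≤ b n} ∈ U

/-- An ultrafilter is free if it extends the cofinite filter. -/
def Free (U : Ultrafilter ℕ) : Prop := (U : Filter ℕ) ≤ Filter.cofinite

/-- Elements of `[ω]^ω`, identified with their increasing enumerations. -/
abbrev IncSeq : Type := {f : ℕ → ℕ // StrictMono f}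

/-- A subset of `[ω]^ω` is bounded if some element of `[ω]^ω` `≤*`-dominates it. -/
def Bounded (A : Set IncSeq) : Prop := ∃ b : IncSeq, ∀ a ∈ A, LeStar a.1 b.1

/-- A subset of `[ω]^ω` is dominating if it `≤*`-dominates every element of `[ω]^ω`. -/
def Dominating (D : Set IncSeq) : Prop := ∀ a : IncSeq, ∃ d ∈ D, LeStar a.1 d.1

/-- A subset of `[ω]^ω` is `≤_U`-bounded if some element of `[ω]^ω` `≤_U`-dominates it. -/
def UBounded (U : Ultrafilter ℕ) (A : Set IncSeq) : Prop := ∃ b : IncSeq, ∀ a ∈ A, LeU U a.1 b.1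

/-- `𝔟`: the least cardinality of an unbounded subset of `[ω]^ω`. -/
noncomputable def frakB : Cardinal := sInf {c | ∃ A : Set IncSeq, ¬ Bounded A ∧ c = #A}

/-- `𝔡`: the least cardinality of a dominating subset of `[ω]^ω`. -/
noncomputable def frakD : Cardinal := sInf {c | ∃ D : Set IncSeq, Dominating D ∧ c = #D}

/-- `𝔟(U)`: the least cardinality of a `≤_U`-unbounded subset of `[ω]^ω`. -/
noncomputable def frakBU (U : Ultrafilter ℕ) : Cardinal :=
  sInf {c | ∃ A : Set IncSeq, ¬ UBounded U A ∧ c = #A}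

/-- A set `A ⊆ [ω]^ω` is `𝔡`-unbounded if `|A| ≥ 𝔡` and every bounded subset of `A`
has cardinality less than `𝔡`. -/
def DUnbounded (A : Set IncSeq) : Prop :=
  frakD ≤ #A ∧ ∀ B ⊆ A, Bounded B → #B < frakD

/-- A space is Menger if for every sequence of open covers there are finite
subfamilies whose unions form a cover. -/
def Menger (Z : Type*) [TopologicalSpace Z] : Prop :=
  ∀ 𝒰 : ℕ → Set (Set Z), (∀ n, (∀ u ∈ 𝒰 n, IsOpen u) ∧ ⋃₀ 𝒰 n = Set.univ) →
    ∃ F : ℕ → Set (Set Z), (∀ n, F n ⊆ 𝒰 n ∧ (F n).Finite) ∧ (⋃ n, ⋃₀ F n) = Set.univ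

/-- A space is `U`-Menger if for every sequence of open covers there are finite
subfamilies such that `{n | z ∈ ⋃ F n} ∈ U` for every point `z`. -/
def UMenger (U : Ultrafilter ℕ) (Z : Type*) [TopologicalSpace Z] : Prop :=
  ∀ 𝒰 : ℕ → Set (Set Z), (∀ n, (∀ u ∈ 𝒰 n, IsOpen u) ∧ ⋃₀ 𝒰 n = Set.univ) →
    ∃ F : ℕ → Set (Set Z), (∀ n, F n ⊆ 𝒰 n ∧ (F n).Finite) ∧
      ∀ z : Z, {n | z ∈ ⋃₀ F n} ∈ U

universe u v w

/-!
If `X × T` is not `U`-Menger, then as a Lindelöf space it carries an upper semicontinuous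
`f : X × T → ℕ^ℕ` with increasing values and `≤_U`-unbounded image. Since `𝔟(U) = 𝔡`, there is a
dominating family `d i`, `i < 𝔡`, such that every sequence is `≤_U`-below all but fewer than
`𝔟(U)` of the `d i`; choose `z i = (x i, t i)` with `f (z i)` strictly `≤_U`-above `d i`.
In `T × (ω + 1)^ω × (ω + 1)^ω`, let `Y` consist of the points `(t i, d i, f (z i))` and all points
whose last coordinate is eventually infinite. The `U`-Menger selections for `T`, combined with
compactness of `(ω + 1)^ω × {q | ∀ i ≥ n, q i = ∞}`, take care of all but fewer than `𝔟(U)`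
points of `Y`, and the remaining ones are `≤_U`-bounded; so `Y` is Menger. But `X × Y` is not: the
sequence of covers `(witnessSet f n k)_k` admits no selection `c`, because some `d i` dominates
`c`, and then `(x i, (t i, d i, f (z i)))` is outside `witnessSet f n (c n)` for all large `n`.

A hereditarily Lindelöf Hausdorff space has at most continuum many points, so the universe in
which the test spaces `Y` live is irrelevant.
-/

open Set Filter Topology

theorem hereditarilyLindelofSpace_of_isInducing {X Y : Type*} [TopologicalSpace X]
    [TopologicalSpace Y] [HereditarilyLindelofSpace Y] {f : X → Y} (hf : IsInducing f) :
    HereditarilyLindelofSpace X :=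
  ⟨fun s _ => hf.isLindelof_iff.2 (HereditarilyLindelofSpace.isLindelof (f '' s))⟩

instance hereditarilyLindelofSpace_prod {T P : Type*} [TopologicalSpace T] [TopologicalSpace P]
    [HereditarilyLindelofSpace T] [SecondCountableTopology P] :
    HereditarilyLindelofSpace (T × P) := by
  refine ⟨fun s _ => isLindelof_of_countable_subcover fun {ι} W hW hs => ?_⟩
  let slice (B : Set P) (i : ι) : Set T := ⋃₀ {o | IsOpen o ∧ o ×ˢ B ⊆ W i}
  have slice_open (B : Set P) (i : ι) : IsOpen (slice B i) := isOpen_sUnion fun o ho => ho.1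
  choose t ht_countable ht using fun B => eq_open_union_countable (slice B) (slice_open B)
  refine ⟨⋃ B ∈ TopologicalSpace.countableBasis P, t B,
    (TopologicalSpace.countable_countableBasis P).biUnion fun B _ => ht_countable B,
    fun ⟨a, p⟩ hap => ?_⟩
  obtain ⟨i, hi⟩ := mem_iUnion.1 (hs hap)
  obtain ⟨o, v, ho, hv, hao, hpv, hov⟩ := isOpen_prod_iff.1 (hW i) a p hi
  obtain ⟨B, hB, hpB, hBv⟩ :=
    (TopologicalSpace.isBasis_countableBasis P).exists_subset_of_mem_open hpv hv
  have ha : a ∈ ⋃ j, slice B j :=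
    mem_iUnion.2 ⟨i, o, ⟨ho, (prod_mono_right hBv).trans hov⟩, hao⟩
  rw [← ht B] at ha
  obtain ⟨j, hj, o', ⟨_, ho'⟩, hao'⟩ := mem_iUnion₂.1 ha
  exact mem_iUnion₂.2 ⟨j, mem_iUnion₂.2 ⟨B, hB, hj⟩, ho' ⟨hao', hpB⟩⟩

theorem isGδ_singleton_of_hereditarilyLindelofSpace {T : Type*} [TopologicalSpace T] [T2Space T]
    [HereditarilyLindelofSpace T] (x : T) : IsGδ {x} := by
  obtain ⟨W, hW⟩ := eq_closed_inter_nat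
    (fun V : TopologicalSpace.OpenNhdsOf x => closure (V : Set T)) fun _ => isClosed_closure
  refine isGδ_iff_eq_iInter_nat.2 ⟨fun n => W n, fun n => (W n).isOpen, ?_⟩
  refine (singleton_subset_iff.2 <| mem_iInter.2 fun n => (W n).mem).antisymm fun y hy => ?_
  by_contra hyx
  obtain ⟨V, O, hV, hO, hxV, hyO, hVO⟩ := t2_separation (Ne.symm hyx)
  have hy_closure : y ∈ ⋂ n, closure (W n : Set T) :=
    iInter_mono (fun n => subset_closure) hy
  rw [hW] at hy_closure
  exact (hVO.closure_left hO).notMem_of_mem_left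
    (mem_iInter.1 hy_closure ⟨⟨V, hV⟩, hxV⟩) hyO

/-- Formal terms in a constant and countably many labels on an `ω`-ary operation: names, in
the lowest universe, for the points of a hereditarily Lindelöf space. -/
inductive OmegaTerm : Type
  | const : OmegaTerm
  | node (s : ℕ → OmegaTerm) (k : ℕ → ℕ) : OmegaTerm

/-- The value of a term when a node is sent to a point outside the union of the `k n`-th
neighbourhoods of its arguments, provided this union is not the whole space. -/
noncomputable def OmegaTerm.eval {T : Type*} [Nonempty T] (W : T → ℕ → Set T) : OmegaTerm → T
  | const => Classical.arbitrary T
  | node s k => Classical.epsilon fun x => x ∉ ⋃ n, W ((s n).eval W) (k n)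

/- If `p` is not a value, the neighbourhoods of values that avoid `p` are covered by countably many
of them; the value of the corresponding node lies outside these, yet in its own neighbourhood. -/
theorem OmegaTerm.eval_surjective {T : Type*} [TopologicalSpace T] [HereditarilyLindelofSpace T]
    [Nonempty T] {W : T → ℕ → Set T} (hW_open : ∀ x n, IsOpen (W x n))
    (hW : ∀ x, {x} = ⋂ n, W x n) : Function.Surjective (eval W) := by
  intro p
  by_contra! hp
  have exists_notMem (c : OmegaTerm) : ∃ n, p ∉ W (c.eval W) n := by
    have : p ∉ ({c.eval W} : Set T) := (hp c).symm
    rwa [hW, mem_iInter, not_forall] at this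
  choose k hk using exists_notMem
  have : Nonempty OmegaTerm := ⟨const⟩
  obtain ⟨s, hs⟩ := eq_open_union_nat (fun c => W (c.eval W) (k c)) fun c => hW_open _ _
  let c := node s fun n => k (s n)
  have hc_notMem : c.eval W ∉ ⋃ n, W ((s n).eval W) (k (s n)) :=
    Classical.epsilon_spec (p := (· ∉ _)) ⟨p, by simpa using fun n => hk (s n)⟩
  have hc_self : c.eval W ∈ ⋂ n, W (c.eval W) n := hW _ ▸ mem_singleton _
  exact hc_notMem (hs ▸ mem_iUnion.2 ⟨c, mem_iInter.1 hc_self (k c)⟩)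

theorem small_of_hereditarilyLindelofSpace {T : Type*} [TopologicalSpace T] [T2Space T]
    [HereditarilyLindelofSpace T] : Small.{v} T := by
  cases isEmpty_or_nonempty T
  · infer_instance
  choose W hW_open hW using fun x : T =>
    (isGδ_singleton_of_hereditarilyLindelofSpace x).eq_iInter_nat
  exact small_of_surjective (OmegaTerm.eval_surjective hW_open hW)

section Semicontinuity

variable {Z : Type*} [TopologicalSpace Z]

theorem upperSemicontinuous_find {V : ℕ → Set Z} [∀ j z, Decidable (z ∈ V j)]
    (hV : ∀ j, IsOpen (V j)) (hcov : ∀ z, ∃ j, z ∈ V j) :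
    UpperSemicontinuous fun z => Nat.find (hcov z) := by
  refine upperSemicontinuous_iff_isOpen_preimage.2 fun k => ?_
  have : (fun z => Nat.find (hcov z)) ⁻¹' Iio k = ⋃ j ∈ Iio k, V j := by
    ext z
    simp [Nat.find_lt_iff]
  rw [this]
  exact isOpen_biUnion fun j _ => hV j

theorem upperSemicontinuous_partialSups {γ : Type*} [LinearOrder γ] {f : ℕ → Z → γ}
    (hf : ∀ n, UpperSemicontinuous (f n)) (n : ℕ) :
    UpperSemicontinuous fun z => partialSups (fun m => f m z) n := by
  intro z y hz
  simp only [partialSups_iff_forall (· < y) sup_lt_iff] at hz ⊢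
  exact (eventually_all_finite (finite_Iic n)).2 fun m hm => hf m z y (hz m hm)

theorem isOpen_setOf_natCast_lt {f : Z → ℕ} {g : Z → ℕ∞} (hf : UpperSemicontinuous f)
    (hg : LowerSemicontinuous g) : IsOpen {z | (f z : ℕ∞) < g z} := by
  refine isOpen_iff_mem_nhds.2 fun z hz => ?_
  filter_upwards [hf z _ (Nat.lt_succ_self (f z)), hg z _ hz] with w hfw hgw
  exact (Nat.cast_le.2 (Nat.lt_succ_iff.1 hfw)).trans_lt hgw

end Semicontinuity

section Order

variable {U : Ultrafilter ℕ} {a b : ℕ → ℕ}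

theorem leStar_iff_eventually : LeStar a b ↔ ∀ᶠ n in atTop, a n ≤ b n := by
  rw [← Nat.cofinite_eq_atTop]
  exact Iff.rfl

theorem Free.le_atTop (hU : Free U) : (U : Filter ℕ) ≤ atTop :=
  Nat.cofinite_eq_atTop ▸ hU

theorem not_leU_iff_eventually_lt : ¬ LeU U a b ↔ ∀ᶠ n in U, b n < a n := by
  simp only [← not_le, Ultrafilter.eventually_not]
  exact Iff.rfl

theorem IncSeq.exists_forall_le (g : ℕ → ℕ) : ∃ b : IncSeq, ∀ n, g n ≤ b.1 n :=
  ⟨⟨fun n => n + partialSups g n,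
    fun _ _ h => add_lt_add_of_lt_of_le h (partialSups_monotone g h.le)⟩,
    fun n => (le_partialSups g n).trans (Nat.le_add_left _ _)⟩

theorem Dominating.exists_eventually_le {D : Set IncSeq} (hD : Dominating D) (c : ℕ → ℕ) :
    ∃ d ∈ D, ∀ᶠ n in atTop, c n ≤ d.1 n := by
  obtain ⟨b, hb⟩ := IncSeq.exists_forall_le c
  obtain ⟨d, hd, hbd⟩ := hD b
  exact ⟨d, hd, (leStar_iff_eventually.1 hbd).mono fun n hn => (hb n).trans hn⟩

theorem exists_dominating_mk_eq_frakD : ∃ D : Set IncSeq, Dominating D ∧ #D = frakD := by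
  have h_nonempty : {c | ∃ D : Set IncSeq, Dominating D ∧ c = #D}.Nonempty :=
    ⟨_, univ, fun a => ⟨a, mem_univ a, by simp [LeStar]⟩, rfl⟩
  obtain ⟨D, hD, hcard⟩ := csInf_mem h_nonempty
  exact ⟨D, hD, hcard.symm⟩

theorem exists_leU_of_mk_lt_frakBU {ι : Type} (hι : #ι < frakBU U) (h : ι → ℕ → ℕ) :
    ∃ b : IncSeq, ∀ i, LeU U (h i) b.1 := by
  choose g hg using fun i => IncSeq.exists_forall_le (h i)
  have hbounded : UBounded U (range g) := by
    by_contra hunbounded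
    exact notMem_of_lt_csInf' (Cardinal.mk_range_le.trans_lt hι) ⟨range g, hunbounded, rfl⟩
  obtain ⟨b, hb⟩ := hbounded
  exact ⟨b, fun i => mem_of_superset (hb _ ⟨i, rfl⟩) fun n hn => (hg i n).trans hn⟩

/-- A `U`-scale: each sequence is `≤_U`-below all but fewer than `𝔟(U)` of the members. Scales
are families rather than sets, and the members need not be increasing. -/
def UScale (U : Ultrafilter ℕ) {ι : Type} (y : ι → ℕ → ℕ) : Prop :=
  ∀ c : ℕ → ℕ, #{i // ¬ LeU U c (y i)} < frakBU U

theorem UScale.mono {ι : Type} {y y' : ι → ℕ → ℕ} (hy : UScale U y)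
    (h : ∀ i, LeU U (y i) (y' i)) : UScale U y' := fun c =>
  (Cardinal.mk_subtype_le_of_subset fun {i} hi hci => hi <| by
    filter_upwards [hci, h i] with n using le_trans).trans_lt (hy c)

theorem exists_dominating_uScale (hU : Free U) (hbu : frakBU U = frakD) :
    ∃ (ι : Type) (d : ι → IncSeq), Dominating (range d) ∧ UScale U fun i => (d i).1 := by
  obtain ⟨D, hD, hcard⟩ := exists_dominating_mk_eq_frakD
  let ι := frakD.ord.ToType
  obtain ⟨e⟩ : Nonempty (ι ≃ D) := Cardinal.eq.1 (by simp [ι, hcard])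
  have mk_Iio_lt (i : ι) : #(Iio i) < frakBU U := by
    simpa [ι, hbu] using Cardinal.mk_Iio_lt i (by simp [ι])
  choose b hb using fun i => exists_leU_of_mk_lt_frakBU (mk_Iio_lt i) fun j => (e j.1).1.1
  choose d hd using fun i => IncSeq.exists_forall_le fun n => max ((b i).1 n) ((e i).1.1 n)
  have le_d (i : ι) (n : ℕ) : (e i).1.1 n ≤ (d i).1 n := (le_max_right _ _).trans (hd i n)
  have leU_d {i j : ι} (hij : i ≤ j) : LeU U (e i).1.1 (d j).1 := by
    obtain rfl | hlt := hij.eq_or_lt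
    · exact univ_mem' (le_d i)
    · exact mem_of_superset (hb j ⟨i, hlt⟩) fun n hn =>
        (le_trans hn (le_max_left _ _)).trans (hd j n)
  have exists_ge (c : ℕ → ℕ) : ∃ i, ∀ᶠ n in atTop, c n ≤ (e i).1.1 n := by
    obtain ⟨x, hx, hcx⟩ := hD.exists_eventually_le c
    exact ⟨e.symm ⟨x, hx⟩, by simpa using hcx⟩
  refine ⟨ι, d, fun a => ?_, fun c => ?_⟩
  · obtain ⟨i, hi⟩ := exists_ge a.1
    exact ⟨d i, ⟨i, rfl⟩, leStar_iff_eventually.2 (hi.mono fun n hn => hn.trans (le_d i n))⟩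
  · obtain ⟨i, hi⟩ := exists_ge c
    refine (Cardinal.mk_subtype_le_of_subset fun {j} hj => ?_).trans_lt (mk_Iio_lt i)
    by_contra hij
    refine hj ?_
    filter_upwards [hU.le_atTop hi, leU_d (not_lt.1 hij)] with n using le_trans

end Order

section MengerSpaces

variable {U : Ultrafilter ℕ} {Z : Type*} [TopologicalSpace Z]

theorem UMenger.menger (hZ : UMenger U Z) : Menger Z := fun 𝒰 h𝒰 => by
  obtain ⟨F, hF, hcov⟩ := hZ 𝒰 h𝒰
  exact ⟨F, hF, eq_univ_of_forall fun z => mem_iUnion.2 (U.nonempty_of_mem (hcov z))⟩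

theorem Menger.image {W : Type*} [TopologicalSpace W] (hZ : Menger Z) {f : Z → W}
    (hf : Continuous f) (hsurj : Function.Surjective f) : Menger W := by
  intro 𝒰 h𝒰
  obtain ⟨F, hF, hcov⟩ := hZ (fun n => preimage f '' 𝒰 n) fun n => by
    refine ⟨forall_mem_image.2 fun u hu => ((h𝒰 n).1 u hu).preimage hf, ?_⟩
    rw [sUnion_image, ← preimage_iUnion₂, ← sUnion_eq_biUnion, (h𝒰 n).2, preimage_univ]
  refine ⟨fun n => 𝒰 n ∩ preimage f ⁻¹' F n, fun n => ⟨inter_subset_left,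
    ((hF n).2.preimage hsurj.preimage_injective.injOn).subset inter_subset_right⟩,
    eq_univ_of_forall <| hsurj.forall.2 fun z => ?_⟩
  obtain ⟨n, v, hv, hz⟩ := mem_iUnion.1 (hcov ▸ mem_univ z)
  obtain ⟨u, hu, rfl⟩ := (hF n).1 hv
  exact mem_iUnion.2 ⟨n, u, ⟨hu, hv⟩, hz⟩

theorem Menger.lindelofSpace (hZ : Menger Z) : LindelofSpace Z := by
  refine ⟨isLindelof_of_countable_subcover fun {ι} W hW hcov => ?_⟩
  obtain ⟨F, hF, hFcov⟩ := hZ (fun _ => range W) fun _ =>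
    ⟨forall_mem_range.2 hW, by rw [sUnion_range, univ_subset_iff.1 hcov]⟩
  choose g hg using fun u : range W => u.2
  refine ⟨g '' ⋃ n, Subtype.val ⁻¹' F n, (countable_iUnion fun n =>
    (hF n).2.countable.preimage Subtype.val_injective).image g, fun z hz => ?_⟩
  obtain ⟨n, u, hu, hzu⟩ := mem_iUnion.1 (hFcov.symm ▸ hz)
  let u' : range W := ⟨u, (hF n).1 hu⟩
  refine mem_iUnion₂.2 ⟨g u', mem_image_of_mem g (mem_iUnion.2 ⟨n, hu⟩), ?_⟩
  rwa [hg u']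

theorem Menger.exists_forall_mem (hZ : Menger Z) {O : ℕ → ℕ → Set Z}
    (hO : ∀ n k, IsOpen (O n k)) (hmono : ∀ n, Monotone (O n)) (hcov : ∀ n z, ∃ k, z ∈ O n k) :
    ∃ c : ℕ → ℕ, ∀ z, ∃ n, z ∈ O n (c n) := by
  obtain ⟨F, hF, hFcov⟩ := hZ (fun n => range (O n)) fun n =>
    ⟨forall_mem_range.2 (hO n), by
      rw [sUnion_range]
      exact eq_univ_of_forall fun z => mem_iUnion.2 (hcov n z)⟩
  have exists_bound (n : ℕ) : ∃ c, ∀ u ∈ F n, u ⊆ O n c := by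
    choose! k hk using (hF n).1
    obtain ⟨c, hc⟩ := ((hF n).2.image k).bddAbove
    exact ⟨c, fun u hu => hk hu ▸ hmono n (hc (mem_image_of_mem k hu))⟩
  choose c hc using exists_bound
  refine ⟨c, fun z => ?_⟩
  obtain ⟨n, u, hu, hz⟩ := mem_iUnion.1 (hFcov ▸ mem_univ z)
  exact ⟨n, hc n u hu hz⟩

theorem Menger.exists_forall_frequently_mem (hZ : Menger Z) {O : ℕ → ℕ → Set Z}
    (hO : ∀ n k, IsOpen (O n k)) (hmono : ∀ n, Monotone (O n)) (hcov : ∀ n z, ∃ k, z ∈ O n k) :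
    ∃ c : ℕ → ℕ, ∀ z, ∃ᶠ n in atTop, z ∈ O n (c n) := by
  choose c hc using fun N => hZ.exists_forall_mem (O := fun n => O (N + n))
    (fun n => hO _) (fun n => hmono _) fun n => hcov _
  refine ⟨fun m => (Finset.range (m + 1)).sup fun N => c N (m - N), fun z => ?_⟩
  refine frequently_atTop.2 fun N => ?_
  obtain ⟨n, hn⟩ := hc N z
  refine ⟨N + n, Nat.le_add_right N n, hmono _ ?_ hn⟩
  simpa using Finset.le_sup (f := fun M => c M (N + n - M))
    (Finset.mem_range.2 (by omega : N < N + n + 1))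

theorem exists_seq_subcover [LindelofSpace Z] [Nonempty Z] {𝒰 : Set (Set Z)}
    (h𝒰 : (∀ u ∈ 𝒰, IsOpen u) ∧ ⋃₀ 𝒰 = Set.univ) :
    ∃ V : ℕ → Set Z, (∀ j, V j ∈ 𝒰) ∧ ∀ z, ∃ j, z ∈ V j := by
  obtain ⟨u₀, hu₀, -⟩ : Classical.arbitrary Z ∈ ⋃₀ 𝒰 := h𝒰.2 ▸ mem_univ _
  have : Nonempty 𝒰 := ⟨⟨u₀, hu₀⟩⟩
  obtain ⟨V, hV⟩ := isLindelof_univ.indexed_countable_subcover (fun u : 𝒰 => u.1)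
    (fun u => h𝒰.1 _ u.2) (by rw [← sUnion_eq_iUnion, h𝒰.2])
  exact ⟨fun j => V j, fun j => (V j).2, fun z => mem_iUnion.1 (hV (mem_univ z))⟩

theorem UMenger.of_forall_bounded [LindelofSpace Z]
    (h : ∀ f : Z → ℕ → ℕ, (∀ n, UpperSemicontinuous fun z => f z n) → (∀ z, Monotone (f z)) →
      ∃ b : ℕ → ℕ, ∀ z, LeU U (f z) b) : UMenger U Z := by
  classical
  intro 𝒰 h𝒰
  cases isEmpty_or_nonempty Z
  · exact ⟨fun _ => ∅, fun n => ⟨empty_subset _, finite_empty⟩, isEmptyElim⟩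
  choose V hV hcov using fun n => exists_seq_subcover (h𝒰 n)
  let index (m : ℕ) (z : Z) : ℕ := Nat.find (hcov m z)
  obtain ⟨b, hb⟩ := h (fun z => partialSups fun m => index m z)
    (upperSemicontinuous_partialSups fun m =>
      upperSemicontinuous_find (fun j => (h𝒰 m).1 _ (hV m j)) (hcov m))
    fun z => partialSups_monotone _
  refine ⟨fun n => V n '' Iic (b n), fun n => ⟨image_subset_iff.2 fun j _ => hV n j,
    (finite_Iic _).image _⟩, fun z => ?_⟩
  filter_upwards [hb z] with n hn
  have hindex : index n z ≤ b n := (le_partialSups (fun m => index m z) n).trans hn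
  exact ⟨V n (index n z), mem_image_of_mem _ hindex, Nat.find_spec (hcov n z)⟩

section Tube

variable {T P : Type*} [TopologicalSpace T] [TopologicalSpace P] [CompactSpace P] {Y : Set (T × P)}

theorem exists_tube_finite_subcover {K : ℕ → Set P} (hK : ∀ k, IsClosed (K k))
    (hanti : Antitone K) {s : T} (hKY : ∀ p ∈ ⋂ k, K k, (s, p) ∈ Y) {𝒲 : Set (Set Y)}
    (h𝒲 : (∀ w ∈ 𝒲, IsOpen w) ∧ ⋃₀ 𝒲 = Set.univ) :
    ∃ o, IsOpen o ∧ s ∈ o ∧ ∃ k, ∃ G ⊆ 𝒲, G.Finite ∧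
      ∀ y : Y, y.1.1 ∈ o → y.1.2 ∈ K k → y ∈ ⋃₀ G := by
  have hcompact : IsCompact (⋂ k, K k) := (isClosed_iInter hK).isCompact
  have hcompactY : IsCompact (Subtype.val ⁻¹' {s} ×ˢ ⋂ k, K k : Set Y) := by
    refine IsInducing.subtypeVal.isCompact_preimage' (isCompact_singleton.prod hcompact) ?_
    rintro ⟨_, p⟩ ⟨rfl, hp⟩
    exact ⟨⟨_, hKY p hp⟩, rfl⟩
  obtain ⟨G, hG𝒲, hG, hcov⟩ := hcompactY.elim_finite_subcover_image (c := id) h𝒲.1 <| by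
    simp only [id, ← sUnion_eq_biUnion, h𝒲.2, subset_univ]
  obtain ⟨v, hv, hvG⟩ := isOpen_induced_iff.1 (isOpen_sUnion fun w hw => h𝒲.1 w (hG𝒲 hw))
  have hsub : {s} ×ˢ ⋂ k, K k ⊆ v := by
    rintro ⟨_, p⟩ ⟨rfl, hp⟩
    have : (⟨_, hKY p hp⟩ : Y) ∈ Subtype.val ⁻¹' v := by
      rw [hvG, sUnion_eq_biUnion]
      exact hcov ⟨rfl, hp⟩
    exact this
  obtain ⟨o, V, ho, hV, hso, hKV, hoV⟩ :=
    generalized_tube_lemma isCompact_singleton hcompact hv hsub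
  obtain ⟨k, hk⟩ := exists_subset_nhds_of_isCompact' hanti.directed_ge
    (fun k => (hK k).isCompact) hK fun p hp => hV.mem_nhds (hKV hp)
  refine ⟨o, ho, hso rfl, k, G, hG𝒲, hG, fun y hyo hyK => ?_⟩
  rw [← hvG]
  exact hoV ⟨hyo, hk hyK⟩

theorem UMenger.exists_finite_subcovers (hT : UMenger U T) {K : ℕ → ℕ → Set P}
    (hK : ∀ n k, IsClosed (K n k)) (hanti : ∀ n, Antitone (K n))
    (hKY : ∀ n s, ∀ p ∈ ⋂ k, K n k, (s, p) ∈ Y) {𝒲 : ℕ → Set (Set Y)}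
    (h𝒲 : ∀ n, (∀ w ∈ 𝒲 n, IsOpen w) ∧ ⋃₀ 𝒲 n = Set.univ) :
    ∃ (c : ℕ → ℕ) (G : ℕ → Set (Set Y)), (∀ n, G n ⊆ 𝒲 n ∧ (G n).Finite) ∧
      ∀ y : Y, ∀ᶠ n in U, y.1.2 ∈ K n (c n) → y ∈ ⋃₀ G n := by
  obtain ⟨F, hF, hFcov⟩ := hT (fun n => {o | IsOpen o ∧ ∃ k, ∃ G ⊆ 𝒲 n, G.Finite ∧
      ∀ y : Y, y.1.1 ∈ o → y.1.2 ∈ K n k → y ∈ ⋃₀ G}) fun n =>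
    ⟨fun o ho => ho.1, eq_univ_of_forall fun s => by
      obtain ⟨o, ho, hs, h⟩ := exists_tube_finite_subcover (hK n) (hanti n) (hKY n s) (h𝒲 n)
      exact ⟨o, ⟨ho, h⟩, hs⟩⟩
  choose! k G hG𝒲 hG hcov using fun n o (ho : o ∈ F n) => ((hF n).1 ho).2
  choose c hc using fun n => ((hF n).2.image (k n)).bddAbove
  refine ⟨c, fun n => ⋃ o ∈ F n, G n o, fun n =>
    ⟨iUnion₂_subset (hG𝒲 n), (hF n).2.biUnion (hG n)⟩, fun y => ?_⟩
  filter_upwards [hFcov y.1.1] with n ⟨o, ho, hyo⟩ hyK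
  obtain ⟨w, hw, hyw⟩ := hcov n o ho y hyo (hanti n (hc n (mem_image_of_mem _ ho)) hyK)
  exact ⟨w, mem_iUnion₂.2 ⟨o, ho, hw⟩, hyw⟩

end Tube

end MengerSpaces

section ConcentratedSet

variable {U : Ultrafilter ℕ} {T E : Type*} {ι : Type} {t : ι → T} {a : ι → E} {y : ι → ℕ → ℕ}

/-- The points with eventually infinite last coordinate, on which the set is concentrated when `y`
is a `U`-scale, together with the points `(t i, a i, y i)`. The second coordinate only labels the
sequences `y i`. -/
def concentratedSet (t : ι → T) (a : ι → E) (y : ι → ℕ → ℕ) : Set (T × E × (ℕ → ℕ∞)) :=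
  {p | ∃ n, ∀ i ≥ n, p.2.2 i = ⊤} ∪ range fun i => (t i, a i, fun n => (y i n : ℕ∞))

theorem infinite_concentratedSet [Infinite T] [Nonempty E] : Infinite (concentratedSet t a y) :=
  Infinite.of_injective
    (fun s => ⟨(s, Classical.arbitrary E, fun _ => ⊤), Or.inl ⟨0, fun _ _ => rfl⟩⟩)
    fun _ _ h => congrArg (fun p => p.1.1) h

/-- The compact sets cut out by the lower bound `k` from the index `n` on. As `k` grows they
shrink to the sequences that are infinite from `n` on. -/
def tailGE (E : Type*) (n k : ℕ) : Set (E × (ℕ → ℕ∞)) :=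
  {q | ∀ i ≥ n, (k : ℕ∞) ≤ q.2 i}

theorem isClosed_tailGE [TopologicalSpace E] (n k : ℕ) : IsClosed (tailGE E n k) := by
  simp only [tailGE, ofPred_forall]
  exact isClosed_iInter fun i => isClosed_iInter fun _ =>
    isClosed_le continuous_const (by fun_prop)

theorem antitone_tailGE (n : ℕ) : Antitone (tailGE E n) :=
  fun _ _ hkl _ hq i hi => (Nat.cast_le.2 hkl).trans (hq i hi)

theorem mem_iInter_tailGE {n : ℕ} {q : E × (ℕ → ℕ∞)} :
    q ∈ ⋂ k, tailGE E n k ↔ ∀ i ≥ n, q.2 i = ⊤ := by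
  simp only [tailGE, mem_iInter, mem_ofPred_eq, ENat.eq_top_iff_forall_ge]
  exact ⟨fun h i hi k => h k i hi, fun h k i hi => h i hi k⟩

theorem menger_concentratedSet [TopologicalSpace T] [HereditarilyLindelofSpace T] [Nonempty T]
    [TopologicalSpace E] [CompactSpace E] [SecondCountableTopology E] [Nonempty E] (hU : Free U)
    (hT : UMenger U T) (hmono : ∀ i, Monotone (y i)) (hy : UScale U y) :
    Menger (concentratedSet t a y) := by
  intro 𝒲 h𝒲
  have : Nonempty (concentratedSet t a y) :=
    ⟨⟨(Classical.arbitrary T, Classical.arbitrary E, fun _ => ⊤), Or.inl ⟨0, fun _ _ => rfl⟩⟩⟩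
  obtain ⟨c, G, hG, hGcov⟩ := hT.exists_finite_subcovers isClosed_tailGE antitone_tailGE
    (fun n s q hq => Or.inl ⟨n, mem_iInter_tailGE.1 hq⟩) h𝒲
  choose V hV hVcov using fun n => exists_seq_subcover (h𝒲 n)
  choose g hg using fun p n => hVcov n p
  let point (i : ι) : concentratedSet t a y := ⟨_, Or.inr ⟨i, rfl⟩⟩
  obtain ⟨b, hb⟩ := exists_leU_of_mk_lt_frakBU (hy c) fun i => g (point i.1)
  have covered (p : concentratedSet t a y) : ∃ n, p ∈ ⋃₀ G n ∨ g p n ≤ b.1 n := by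
    obtain ⟨p, ⟨n, hn⟩ | ⟨i, rfl⟩⟩ := p
    · obtain ⟨m, hm, hnm⟩ := ((hGcov _).and (hU.le_atTop (eventually_ge_atTop n))).exists
      exact ⟨m, Or.inl (hm fun j hj => le_top.trans_eq (hn j (le_trans hnm hj)).symm)⟩
    · by_cases hi : LeU U c (y i)
      · obtain ⟨n, hn, hcn⟩ := ((hGcov (point i)).and hi).exists
        exact ⟨n, Or.inl (hn fun j hj => Nat.cast_le.2 (le_trans hcn (hmono i hj)))⟩
      · obtain ⟨n, hn⟩ := U.nonempty_of_mem (hb ⟨i, hi⟩)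
        exact ⟨n, Or.inr hn⟩
  refine ⟨fun n => G n ∪ V n '' Iic (b.1 n), fun n =>
    ⟨union_subset (hG n).1 (image_subset_iff.2 fun j _ => hV n j),
      (hG n).2.union ((finite_Iic _).image _)⟩, eq_univ_of_forall fun p => mem_iUnion.2 ?_⟩
  obtain ⟨n, ⟨w, hw, hp⟩ | hn⟩ := covered p
  · exact ⟨n, w, Or.inl hw, hp⟩
  · exact ⟨n, V n (g p n), Or.inr (mem_image_of_mem _ hn), hg p n⟩

end ConcentratedSet

section WitnessSet

variable {Z : Type*} {f : Z → ℕ → ℕ}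

/-- The points `(z, a, q)` at which `q` exceeds `f z` somewhere, or `a < q` is witnessed at some
`m` with `n ≤ m ≤ k` and `f z m ≤ k`. These are open sets which, for fixed `n`, cover the product
that is to be shown not Menger, but miss `(z, a, f z)` when `a` is increasing and `k ≤ a n`. -/
def witnessSet (f : Z → ℕ → ℕ) (n k : ℕ) : Set (Z × (ℕ → ℕ∞) × (ℕ → ℕ∞)) :=
  {p | ∃ i, (f p.1 i : ℕ∞) < p.2.2 i} ∪ {p | ∃ m ∈ Icc n k, p.2.1 m < p.2.2 m ∧ f p.1 m ≤ k}

theorem isOpen_witnessSet [TopologicalSpace Z] (hf : ∀ n, UpperSemicontinuous fun z => f z n)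
    (n k : ℕ) : IsOpen (witnessSet f n k) := by
  have hf_fst (i : ℕ) :
      UpperSemicontinuous fun p : Z × (ℕ → ℕ∞) × (ℕ → ℕ∞) => f p.1 i :=
    (hf i).comp continuous_fst
  refine IsOpen.union ?_ ?_
  · rw [ofPred_exists]
    exact isOpen_iUnion fun i => isOpen_setOf_natCast_lt (hf_fst i)
      (Continuous.lowerSemicontinuous (by fun_prop))
  · have eq_iUnion : {p : Z × (ℕ → ℕ∞) × (ℕ → ℕ∞) |
        ∃ m ∈ Icc n k, p.2.1 m < p.2.2 m ∧ f p.1 m ≤ k} =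
        ⋃ m ∈ Icc n k, {p | p.2.1 m < p.2.2 m} ∩ (fun p => f p.1 m) ⁻¹' Iio (k + 1) := by
      ext p
      simp [and_left_comm]
    rw [eq_iUnion]
    exact isOpen_biUnion fun m _ =>
      (isOpen_lt (by fun_prop) (by fun_prop)).inter ((hf_fst m).isOpen_preimage _)

theorem monotone_witnessSet (n : ℕ) : Monotone (witnessSet f n) := by
  rintro k l hkl p (h | ⟨m, hm, hlt, hle⟩)
  · exact Or.inl h
  · exact Or.inr ⟨m, Icc_subset_Icc_right hkl hm, hlt, hle.trans hkl⟩

theorem notMem_witnessSet {z : Z} {a : ℕ → ℕ} (ha : Monotone a) {n k : ℕ} (hk : k ≤ a n) :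
    (z, (fun i => (a i : ℕ∞)), fun i => (f z i : ℕ∞)) ∉ witnessSet f n k := by
  rintro (⟨i, hi⟩ | ⟨m, hm, hlt, hle⟩)
  · exact lt_irrefl _ hi
  · exact (Nat.cast_lt.1 hlt).not_ge ((hle.trans hk).trans (ha hm.1))

end WitnessSet

theorem exists_mem_witnessSet {U : Ultrafilter ℕ} (hU : Free U) {X T : Type*} {ι : Type}
    {f : X × T → ℕ → ℕ} {z : ι → X × T} {a : ι → ℕ → ℕ} (hz : ∀ i, ¬ LeU U (f (z i)) (a i))
    (n : ℕ) (x : X) (y : concentratedSet (fun i => (z i).2) (fun i n => (a i n : ℕ∞))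
      fun i => f (z i)) :
    ∃ k, ((x, y.1.1), y.1.2) ∈ witnessSet f n k := by
  obtain ⟨_, ⟨m, hm⟩ | ⟨i, rfl⟩⟩ := y
  · exact ⟨0, Or.inl ⟨m, (ENat.natCast_lt_top _).trans_eq (hm m le_rfl).symm⟩⟩
  · obtain ⟨m, hm, hnm⟩ := ((not_leU_iff_eventually_lt.1 (hz i)).and
      (hU.le_atTop (eventually_ge_atTop n))).exists
    exact ⟨max m (f (x, (z i).2) m), Or.inr ⟨m, ⟨hnm, le_max_left _ _⟩, Nat.cast_lt.2 hm,
      le_max_right _ _⟩⟩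

theorem not_menger_prod_concentratedSet {U : Ultrafilter ℕ} (hU : Free U) {X T : Type*}
    [TopologicalSpace X] [TopologicalSpace T] {ι : Type} {f : X × T → ℕ → ℕ}
    (hf : ∀ n, UpperSemicontinuous fun z => f z n) {z : ι → X × T} {d : ι → IncSeq}
    (hd : Dominating (range d)) (hz : ∀ i, ¬ LeU U (f (z i)) (d i).1) :
    ¬ Menger (X × concentratedSet (fun i => (z i).2) (fun i n => ((d i).1 n : ℕ∞))
      fun i => f (z i)) := by
  intro hMenger
  obtain ⟨c, hc⟩ := hMenger.exists_forall_frequently_mem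
    (O := fun n k => (fun p => ((p.1, p.2.1.1), p.2.1.2)) ⁻¹' witnessSet f n k)
    (fun n k => (isOpen_witnessSet hf n k).preimage (by fun_prop))
    (fun n => monotone_preimage.comp (monotone_witnessSet n))
    fun n p => exists_mem_witnessSet hU hz n p.1 p.2
  obtain ⟨_, ⟨i, rfl⟩, hi⟩ := hd.exists_eventually_le c
  obtain ⟨n, hmem, hn⟩ :=
    ((hc ((z i).1, ⟨_, Or.inr ⟨i, rfl⟩⟩)).and_eventually hi).exists
  exact notMem_witnessSet (d i).2.monotone hn hmem

/-- The spaces whose products with all infinite hereditarily Lindelöf Menger Tychonoff spaces (in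
a fixed universe) are Menger: productively Menger spaces within the hereditarily Lindelöf class. -/
def ProductivelyMenger (X : Type u) [TopologicalSpace X] : Prop :=
  ∀ (Y : Type v) [TopologicalSpace Y] [T35Space Y] [Infinite Y] [HereditarilyLindelofSpace Y],
    Menger Y → Menger (X × Y)

theorem ProductivelyMenger.menger_prod {X : Type u} [TopologicalSpace X]
    (hX : ProductivelyMenger.{u, v} X) {Y : Type w} [TopologicalSpace Y] [T35Space Y] [Infinite Y]
    [HereditarilyLindelofSpace Y] (hY : Menger Y) : Menger (X × Y) := by
  have : Small.{v} Y := small_of_hereditarilyLindelofSpace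
  let e := Shrink.homeomorph.{v} Y
  have : T35Space (Shrink.{v} Y) := e.symm.isEmbedding.t35Space
  have : Infinite (Shrink.{v} Y) := Infinite.of_injective e e.injective
  have : HereditarilyLindelofSpace (Shrink.{v} Y) :=
    hereditarilyLindelofSpace_of_isInducing e.symm.isInducing
  let e' := (Homeomorph.refl X).prodCongr e.symm
  exact (hX _ (hY.image e.continuous e.surjective)).image e'.continuous e'.surjective

theorem stmt13_general {X : Type u} [TopologicalSpace X] (hX : ProductivelyMenger.{u, v} X)
    {U : Ultrafilter ℕ} (hU : Free U) (hbu : frakBU U = frakD) {T : Type w} [TopologicalSpace T]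
    [T35Space T] [Infinite T] [HereditarilyLindelofSpace T] (hT : UMenger U T) :
    UMenger U (X × T) := by
  have : LindelofSpace (X × T) := (hX.menger_prod hT.menger).lindelofSpace
  refine .of_forall_bounded fun f hf hmono => ?_
  by_contra! hunbounded
  obtain ⟨ι, d, hd, hscale⟩ := exists_dominating_uScale hU hbu
  choose z hz using fun i => hunbounded (d i).1
  have : Infinite (concentratedSet (fun i => (z i).2) (fun i n => ((d i).1 n : ℕ∞))
    fun i => f (z i)) := infinite_concentratedSet
  refine not_menger_prod_concentratedSet hU hf hd hz (hX.menger_prod ?_)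
  refine menger_concentratedSet hU hT (fun i => hmono (z i)) (hscale.mono fun i => ?_)
  exact (not_leU_iff_eventually_lt.1 (hz i)).mono fun n => le_of_lt

/-- in the class of hereditarily Lindelöf spaces, each productively
Menger space is productively `U`-Menger for all ultrafilters `U` with `𝔟(U) = 𝔡`. -/
theorem stmt13
    (X : Type u) [TopologicalSpace X] [T35Space X] [Infinite X]
    (hX : ∀ (Y : Type v) [TopologicalSpace Y] [T35Space Y] [Infinite Y]
      [HereditarilyLindelofSpace Y], Menger Y → Menger (X × Y))
    (U : Ultrafilter ℕ) (hU : Free U) (hbu : frakBU U = frakD)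
    (T : Type w) [TopologicalSpace T] [T35Space T] [Infinite T]
    [HereditarilyLindelofSpace T] (hT : UMenger U T) :
    UMenger U (X × T) :=
  stmt13_general hX hU hbu hT
end

section
/- Let U be a free ultrafilter on ℕ and let 2U be the ultrafilter on ℕ generated by the family {2u : u ∈ U}, where 2u := {2n : n ∈ u}. Then every U-Menger infinite Tychonoff space is 2U-Menger. -/
universe u

/-- `2U`: the ultrafilter generated by `{2u : u ∈ U}`, i.e. the pushforward of `U`
under `n ↦ 2n`. -/
def twoU (U : Ultrafilter ℕ) : Ultrafilter ℕ := U.map (fun n => 2 * n)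

/-- A finite-to-one `f` witnesses that `U.map f` lies below `U` in the Rudin–Blass order. -/
theorem stmt14_general {U : Ultrafilter ℕ} {f : ℕ → ℕ} (hf : ∀ m, (f ⁻¹' {m}).Finite)
    {X : Type*} [TopologicalSpace X] (hX : UMenger U X) : UMenger (U.map f) X := by
  intro 𝒰 h𝒰
  obtain ⟨G, hG, hGU⟩ := hX (fun n => 𝒰 (f n)) fun n => h𝒰 (f n)
  refine ⟨fun m => ⋃ n ∈ f ⁻¹' {m}, G n, fun m => ⟨?subset, ?finite⟩, fun z => ?mem⟩
  case subset =>
    refine Set.iUnion₂_subset ?_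
    rintro n rfl
    exact (hG n).1
  case finite => exact (hf m).biUnion fun n _ => (hG n).2
  case mem =>
    have fiber_subset : ∀ n, G n ⊆ ⋃ k ∈ f ⁻¹' {f n}, G k := fun n =>
      Set.subset_biUnion_of_mem (u := G) (Set.mem_singleton (f n))
    exact Ultrafilter.mem_map.2 <| Filter.mem_of_superset (hGU z) fun n hz =>
      Set.sUnion_mono (fiber_subset n) hz

/-- every `U`-Menger infinite Tychonoff space is `2U`-Menger. -/
theorem stmt14 (U : Ultrafilter ℕ) (hU : Free U)
    (X : Type u) [TopologicalSpace X] [T35Space X] [Infinite X]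
    (hX : UMenger U X) : UMenger (twoU U) X :=
  stmt14_general
    (fun m => (Set.finite_singleton m).preimage (mul_right_injective₀ two_ne_zero).injOn) hX
end
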